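/- For every integer n ≥ 3, the number of distinct prime factors of n satisfies omega(n) < 1.3841 * log(n) / log(log(n)). -/

import Mathlib

/-!
A number with `k` distinct prime factors is at least the product `N k` of the first `k` primes, so
only `n ≥ N k` matters. For `0 < s < c`, the tangent to `log` at `k / s` gives
`k * log (log n) ≤ k * log (k / (s * e)) + s * log n`, which is less than `c * log n` as soon as
`(k / (s * e)) ^ k < N k ^ (c - s)`. For `c = 1.3841` two slopes are enough: `s = c - 1` for
`k ≥ 11`, by induction on `k` using `p_k ≥ 3 * k`, and `s = c - 11 / 12` for `k ≤ 10`, where the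
inequality is a numerical check.
-/

open Finset Real

theorem mod_six_eq_of_prime {p : ℕ} (hp : p.Prime) (hp3 : 3 < p) : p % 6 = 1 ∨ p % 6 = 5 := by
  have h2 : ¬2 ∣ p := (Nat.prime_dvd_prime_iff_eq Nat.prime_two hp).not.2 (by omega)
  have h3 : ¬3 ∣ p := (Nat.prime_dvd_prime_iff_eq Nat.prime_three hp).not.2 (by omega)
  omega

theorem nth_prime_add_six_le {k : ℕ} (hk : 2 ≤ k) :
    Nat.nth Nat.Prime k + 6 ≤ Nat.nth Nat.Prime (k + 2) := by
  have hmono := Nat.nth_strictMono Nat.infinite_setOfPred_prime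
  have hlt : Nat.nth Nat.Prime k < Nat.nth Nat.Prime (k + 1) := hmono k.lt_succ_self
  have hlt' : Nat.nth Nat.Prime (k + 1) < Nat.nth Nat.Prime (k + 2) := hmono (k + 1).lt_succ_self
  have hge := Nat.add_two_le_nth_prime k
  have hmod := mod_six_eq_of_prime (Nat.prime_nth_prime k) (by omega)
  have hmod' := mod_six_eq_of_prime (Nat.prime_nth_prime (k + 1)) (by omega)
  have hmod'' := mod_six_eq_of_prime (Nat.prime_nth_prime (k + 2)) (by omega)
  omega

theorem nth_eq_of_count_eq {p : ℕ → Prop} [DecidablePred p] {k a : ℕ} (ha : p a)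
    (hcount : Nat.count p a = k) : Nat.nth p k = a :=
  hcount ▸ Nat.nth_count ha

theorem nth_prime_zero_to_twelve :
    Nat.nth Nat.Prime 0 = 2 ∧ Nat.nth Nat.Prime 1 = 3 ∧ Nat.nth Nat.Prime 2 = 5 ∧
    Nat.nth Nat.Prime 3 = 7 ∧ Nat.nth Nat.Prime 4 = 11 ∧ Nat.nth Nat.Prime 5 = 13 ∧
    Nat.nth Nat.Prime 6 = 17 ∧ Nat.nth Nat.Prime 7 = 19 ∧ Nat.nth Nat.Prime 8 = 23 ∧
    Nat.nth Nat.Prime 9 = 29 ∧ Nat.nth Nat.Prime 10 = 31 ∧ Nat.nth Nat.Prime 11 = 37 ∧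
    Nat.nth Nat.Prime 12 = 41 := by
  and_intros <;> exact nth_eq_of_count_eq (by norm_num) (by decide)

theorem three_mul_succ_le_nth_prime {k : ℕ} (hk : 11 ≤ k) :
    3 * (k + 1) ≤ Nat.nth Nat.Prime k := by
  induction k using Nat.twoStepInduction with
  | zero | one => omega
  | more k ih _ =>
    rcases le_or_gt 11 k with h11 | h11
    · linarith [ih h11, nth_prime_add_six_le (show 2 ≤ k by omega)]
    · obtain rfl | rfl : k = 9 ∨ k = 10 := by omega
      all_goals norm_num [nth_prime_zero_to_twelve]

theorem nth_card_le {p : ℕ → Prop} {s : Finset ℕ} {a : ℕ} (hs : ∀ b ∈ s, p b ∧ b < a) (ha : p a) :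
    Nat.nth p #s ≤ a := by
  classical
  refine Nat.lt_succ_iff.1 (Nat.nth_lt_of_lt_count ?_)
  rw [Nat.count_succ_eq_succ_count ha, Nat.lt_succ_iff, Nat.count_eq_card_filter_range]
  exact card_le_card fun b hb => mem_filter.2 ⟨mem_range.2 (hs b hb).2, (hs b hb).1⟩

theorem prod_range_nth_le_prod {p : ℕ → Prop} (s : Finset ℕ) (hs : ∀ a ∈ s, p a) :
    ∏ i ∈ range #s, Nat.nth p i ≤ ∏ a ∈ s, a := by
  induction s using Finset.induction_on_max with
  | empty => simp
  | insert a s hlt ih =>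
    have ha : a ∉ s := fun h => (hlt a h).false
    rw [card_insert_of_notMem ha, prod_range_succ, prod_insert ha, mul_comm a]
    have hs' : ∀ b ∈ s, p b := fun b hb => hs b (mem_insert_of_mem hb)
    exact Nat.mul_le_mul (ih hs') (nth_card_le (fun b hb => ⟨hs' b hb, hlt b hb⟩)
      (hs a (mem_insert_self a s)))

/-- The product of the first `k` primes, often written `p_k #`. Unlike `primorial`, it is indexed
by the number of prime factors. -/
noncomputable def nthPrimorial (k : ℕ) : ℕ :=
  ∏ i ∈ range k, Nat.nth Nat.Prime i

theorem nthPrimorial_succ (k : ℕ) :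
    nthPrimorial (k + 1) = nthPrimorial k * Nat.nth Nat.Prime k :=
  prod_range_succ _ k

theorem nthPrimorial_pos (k : ℕ) : 0 < nthPrimorial k :=
  prod_pos fun i _ => (Nat.prime_nth_prime i).pos

theorem nthPrimorial_card_primeFactors_le {n : ℕ} (hn : n ≠ 0) :
    nthPrimorial #n.primeFactors ≤ n :=
  (prod_range_nth_le_prod _ fun _ => Nat.prime_of_mem_primeFactors).trans
    (Nat.le_of_dvd (Nat.pos_of_ne_zero hn) (Nat.prod_primeFactors_dvd n))

theorem mul_log_le_tangent {k s x : ℝ} (hk : 0 < k) (hs : 0 < s) (hx : 0 < x) :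
    k * log x ≤ k * log (k / (s * exp 1)) + s * x := by
  have htangent : log (x / (k / s)) ≤ x / (k / s) - 1 := log_le_sub_one_of_pos (by positivity)
  rw [log_div hx.ne' (by positivity)] at htangent
  have hlog : log (k / (s * exp 1)) = log (k / s) - 1 := by
    rw [← div_div, log_div (by positivity) (by positivity), log_exp]
  calc k * log x ≤ k * (log (k / s) - 1 + x / (k / s)) := by gcongr; linarith
    _ = k * log (k / (s * exp 1)) + s * x := by rw [hlog]; field_simp

theorem mul_log_log_lt_of_pow_lt {k a b : ℕ} {c N n : ℝ} (hk : 0 < k) (hb : 0 < b) (hn : 1 < n)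
    (hN : 0 < N) (hNn : N ≤ n) (hs : 0 < c - a / b)
    (hpow : (k / ((c - a / b) * exp 1)) ^ (b * k) < N ^ a) :
    k * log (log n) < c * log n := by
  have hk' : (0 : ℝ) < k := mod_cast hk
  have hb' : (0 : ℝ) < b := mod_cast hb
  have hlog : b * k * log (k / ((c - a / b) * exp 1)) < a * log N := by
    have := log_lt_log (by positivity) hpow
    rwa [log_pow, log_pow, Nat.cast_mul] at this
  have hlog' : k * log (k / ((c - a / b) * exp 1)) < a / b * log N := by
    rw [div_mul_eq_mul_div, lt_div_iff₀ hb']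
    linarith
  calc k * log (log n)
      ≤ k * log (k / ((c - a / b) * exp 1)) + (c - a / b) * log n :=
        mul_log_le_tangent hk' hs (log_pos hn)
    _ < a / b * log N + (c - a / b) * log n := by gcongr
    _ ≤ a / b * log n + (c - a / b) * log n := by gcongr
    _ = c * log n := by ring

theorem pow_succ_le_exp_one_mul_pow (k : ℕ) :
    ((k : ℝ) + 1) ^ (k + 1) ≤ exp 1 * k ^ k * (k + 1) := by
  rcases k.eq_zero_or_pos with rfl | hk
  · simp
  have hk' : (k : ℝ) ≠ 0 := mod_cast hk.ne'
  calc ((k : ℝ) + 1) ^ (k + 1) = (1 + (k : ℝ)⁻¹) ^ k * k ^ k * (k + 1) := by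
        rw [pow_succ, ← mul_pow, add_mul, inv_mul_cancel₀ hk', one_mul]
    _ ≤ exp 1 * k ^ k * (k + 1) := by gcongr; exact one_add_inv_pow_le_exp

theorem div_pow_lt_nthPrimorial_of_le {s : ℝ} (hs : 1 / 3 ≤ s) {m k : ℕ} (hm : 11 ≤ m)
    (hbase : (m / (s * exp 1)) ^ m < nthPrimorial m) (hmk : m ≤ k) :
    (k / (s * exp 1)) ^ k < nthPrimorial k := by
  induction k, hmk using Nat.le_induction with
  | base => exact hbase
  | succ k hmk ih =>
    have hs0 : 0 < s := by linarith
    have hnth : 3 * ((k : ℝ) + 1) ≤ Nat.nth Nat.Prime k :=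
      mod_cast three_mul_succ_le_nth_prime (hm.trans hmk)
    have hratio : ((k : ℝ) + 1) / s ≤ 3 * (k + 1) := by
      rw [div_le_iff₀ hs0]
      nlinarith
    push_cast [nthPrimorial_succ]
    calc (((k : ℝ) + 1) / (s * exp 1)) ^ (k + 1)
        = (k + 1) ^ (k + 1) / (s * exp 1) ^ (k + 1) := div_pow ..
      _ ≤ exp 1 * k ^ k * (k + 1) / (s * exp 1) ^ (k + 1) := by
        gcongr
        exact pow_succ_le_exp_one_mul_pow k
      _ = (k / (s * exp 1)) ^ k * ((k + 1) / s) := by rw [div_pow, pow_succ]; field_simp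
      _ < nthPrimorial k * Nat.nth Nat.Prime k :=
        mul_lt_mul ih (hratio.trans hnth) (by positivity) (by positivity)

theorem div_mul_exp_one_pow_le {x s : ℝ} (hx : 0 ≤ x) (hs : 0 < s) (m : ℕ) :
    (x / (s * exp 1)) ^ m ≤ (x / (s * 2.7182)) ^ m := by
  gcongr
  linarith [exp_one_gt_d9]

theorem div_pow_lt_nthPrimorial {k : ℕ} (hk : 11 ≤ k) :
    (k / ((1.3841 - 1) * exp 1)) ^ k < nthPrimorial k := by
  refine div_pow_lt_nthPrimorial_of_le (by norm_num) le_rfl ?_ hk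
  refine (div_mul_exp_one_pow_le (Nat.cast_nonneg 11) (by norm_num) 11).trans_lt ?_
  norm_num [nthPrimorial, prod_range_succ, nth_prime_zero_to_twelve]

/-
The constant 1.3841 is nearly attained at the product of the first 9 primes, so `1.3841 - 11 / 12`
has to be close to the optimal slope `9 / log (nthPrimorial 9) ≈ 0.468`. With `1` in place of
`11 / 12` the inequality already fails for `k = 9` and `k = 10`.
-/
theorem div_pow_lt_nthPrimorial_pow_of_le_ten {k : ℕ} (hk : 0 < k) (hk' : k ≤ 10) :
    (k / ((1.3841 - 11 / 12) * exp 1)) ^ (12 * k) < (nthPrimorial k : ℝ) ^ 11 := by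
  refine (div_mul_exp_one_pow_le k.cast_nonneg (by norm_num) (12 * k)).trans_lt ?_
  interval_cases k <;> norm_num [nthPrimorial, prod_range_succ, nth_prime_zero_to_twelve]

theorem omega_upper_bound (n : ℕ) (hn : 3 ≤ n) :
    (n.primeFactors.card : ℝ) < 1.3841 * Real.log n / Real.log (Real.log n) := by
  have hn3 : (3 : ℝ) ≤ n := mod_cast hn
  have hlog : 1 < log n := by
    rw [lt_log_iff_exp_lt (by linarith)]
    exact exp_one_lt_three.trans_le hn3
  rw [lt_div_iff₀ (log_pos hlog)]
  have hcard : 0 < #n.primeFactors := card_pos.2 (Nat.nonempty_primeFactors.2 (by omega))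
  have hN : (0 : ℝ) < nthPrimorial #n.primeFactors := mod_cast nthPrimorial_pos _
  have hNn : (nthPrimorial #n.primeFactors : ℝ) ≤ n :=
    mod_cast nthPrimorial_card_primeFactors_le (by omega)
  rcases le_or_gt 11 #n.primeFactors with hlarge | hsmall
  · apply mul_log_log_lt_of_pow_lt (a := 1) (b := 1) hcard one_pos (by linarith) hN hNn
    · norm_num
    · simpa using div_pow_lt_nthPrimorial hlarge
  · apply mul_log_log_lt_of_pow_lt (a := 11) (b := 12) hcard (by norm_num) (by linarith) hN hNn
    · norm_num
    · exact mod_cast div_pow_lt_nthPrimorial_pow_of_le_ten hcard (by omega)
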